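/- arXiv:0806.0836 — 7 statements merged into one kernel-verified Lean document; each statement's English description precedes it below -/
import Mathlib

section
/- Let Γ and Γ' be finite connected loopless multigraphs, let w be a weight on Γ, and let φ : Γ → Γ' be a w-harmonic morphism. Assume Γ' has at least one edge and Γ has at least one edge. Then for any two edges e' and e'' of Γ', one has Σ_{e ∈ φ^{-1}(e')} w(e) = Σ_{e ∈ φ^{-1}(e'')} w(e); that is, the degree deg φ := Σ_{e ∈ φ^{-1}(e')} w(e) of the w-harmonic morphism φ is well-defined, independent of the choice of edge e' of Γ'. -/
open Finset

/-- A finite loopless connected multigraph: vertices `V`, edges `E`, each edge incident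
to an unordered pair of distinct vertices. -/
structure Multigraph (V E : Type) [Fintype V] [Fintype E] where
  inc : E → Sym2 V
  loopless : ∀ e, ¬ (inc e).IsDiag
  connected : (SimpleGraph.fromRel fun u v => ∃ e, inc e = s(u, v)).Connected

variable {V E V' E' : Type} [Fintype V] [Fintype E] [Fintype V'] [Fintype E']
  [DecidableEq V] [DecidableEq E] [DecidableEq V'] [DecidableEq E']

/-- The degree of a vertex: the number of edges incident to it. -/
def Multigraph.deg (G : Multigraph V E) (v : V) : ℤ :=
  ((univ.filter fun e => v ∈ G.inc e).card : ℤ)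

/-- The first Betti number `#E - #V + 1` of a connected graph. -/
def Multigraph.b1 (G : Multigraph V E) : ℤ :=
  (Fintype.card E : ℤ) - (Fintype.card V : ℤ) + 1

/-- The canonical divisor `K_Γ(v) = deg v - 2`. -/
def Multigraph.K (G : Multigraph V E) : V → ℤ := fun v => G.deg v - 2

/-- A morphism of multigraphs: maps on vertices and edges compatible with incidence. -/
structure GraphHom (G : Multigraph V E) (G' : Multigraph V' E') where
  vmap : V → V'
  emap : E → E'
  compat : ∀ e : E, Sym2.map vmap (G.inc e) = G'.inc (emap e)

/-- `localDeg G G' φ w v e'` is `Σ_{e incident to v, φ(e) = e'} w(e)`. -/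
def localDeg (G : Multigraph V E) (G' : Multigraph V' E') (φ : GraphHom G G')
    (w : E → ℤ) (v : V) (e' : E') : ℤ :=
  ∑ e ∈ univ.filter (fun e => v ∈ G.inc e ∧ φ.emap e = e'), w e

theorem fiber_sum_eq (G : Multigraph V E) (G' : Multigraph V' E') (φ : GraphHom G G')
    (w : E → ℤ) (x : V') (e' : E') (hx : x ∈ G'.inc e') :
    ∑ e ∈ univ.filter (fun e => φ.emap e = e'), w e
      = ∑ v ∈ univ.filter (fun v => φ.vmap v = x), localDeg G G' φ w v e' := by
  unfold localDeg
  have h1 : ∀ v : V, ∑ e ∈ univ.filter (fun e => v ∈ G.inc e ∧ φ.emap e = e'), w e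
      = ∑ e ∈ univ.filter (fun e => φ.emap e = e'), if v ∈ G.inc e then w e else 0 := by
    intro v
    rw [← Finset.sum_filter, Finset.filter_filter]
    exact Finset.sum_congr (by ext e; simp [and_comm]) (fun _ _ => rfl)
  simp_rw [h1]
  rw [Finset.sum_comm]
  refine Finset.sum_congr rfl fun e he => ?_
  have he' : φ.emap e = e' := by simpa using he
  have hc := φ.compat e
  rw [he'] at hc
  have hl := G'.loopless e'
  rw [← hc] at hx hl
  obtain ⟨a, ha, hax⟩ := Sym2.mem_map.1 hx
  obtain ⟨b, hb⟩ := ha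
  rw [hb] at hl
  have hne : φ.vmap a ≠ φ.vmap b := by simpa using hl
  rw [Finset.sum_eq_single a]
  · simp [hb]
  · intro v hv hva
    have hv' : φ.vmap v = x := by simpa using hv
    rw [if_neg]
    rw [hb, Sym2.mem_iff]
    rintro (h | h)
    · exact hva h
    · subst h
      exact hne (hax.trans hv'.symm)
  · intro h
    simp [hax] at h

/-- For a `w`-harmonic morphism `φ : Γ → Γ'` of finite connected loopless
multigraphs (both having at least one edge), the sum `Σ_{e ∈ φ⁻¹(e')} w(e)` is the same
for any two edges `e'`, `e''` of `Γ'`; i.e. the degree of `φ` is well-defined. -/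
theorem degree_well_defined
    (G : Multigraph V E) (G' : Multigraph V' E') (φ : GraphHom G G')
    (w : E → ℤ) (hw : ∀ e, 0 < w e)
    (hharm : ∀ (v : V) (e₁ e₂ : E'), φ.vmap v ∈ G'.inc e₁ → φ.vmap v ∈ G'.inc e₂ →
      localDeg G G' φ w v e₁ = localDeg G G' φ w v e₂)
    (hE : Nonempty E) (hE' : Nonempty E') (e' e'' : E') :
    ∑ e ∈ univ.filter (fun e => φ.emap e = e'), w e
      = ∑ e ∈ univ.filter (fun e => φ.emap e = e''), w e := by
  have key : ∀ (x : V') (e₁ e₂ : E'), x ∈ G'.inc e₁ → x ∈ G'.inc e₂ →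
      ∑ e ∈ univ.filter (fun e => φ.emap e = e₁), w e
      = ∑ e ∈ univ.filter (fun e => φ.emap e = e₂), w e := by
    intro x e₁ e₂ h₁ h₂
    rw [fiber_sum_eq G G' φ w x e₁ h₁, fiber_sum_eq G G' φ w x e₂ h₂]
    refine Finset.sum_congr rfl fun v hv => ?_
    have hv' : φ.vmap v = x := by simpa using hv
    exact hharm v e₁ e₂ (hv' ▸ h₁) (hv' ▸ h₂)
  have walk : ∀ (x y : V'),
      (SimpleGraph.fromRel fun u v => ∃ e, G'.inc e = s(u, v)).Walk x y →
      ∀ e₁ e₂ : E', x ∈ G'.inc e₁ → y ∈ G'.inc e₂ →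
      ∑ e ∈ univ.filter (fun e => φ.emap e = e₁), w e
      = ∑ e ∈ univ.filter (fun e => φ.emap e = e₂), w e := by
    intro x y p
    induction p with
    | nil => exact fun e₁ e₂ h₁ h₂ => key _ e₁ e₂ h₁ h₂
    | cons hadj _ ih =>
      intro e₁ e₂ h₁ h₂
      rw [SimpleGraph.fromRel_adj] at hadj
      obtain ⟨_, ⟨f, hf⟩ | ⟨f, hf⟩⟩ := hadj
      · exact (key _ e₁ f h₁ (by simp [hf])).trans (ih f e₂ (by simp [hf]) h₂)
      · exact (key _ e₁ f h₁ (by simp [hf])).trans (ih f e₂ (by simp [hf]) h₂)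
  obtain ⟨x, hx⟩ : ∃ x, x ∈ G'.inc e' := ⟨_, Sym2.out_fst_mem _⟩
  obtain ⟨y, hy⟩ : ∃ y, y ∈ G'.inc e'' := ⟨_, Sym2.out_fst_mem _⟩
  obtain ⟨p⟩ := G'.connected.preconnected x y
  exact walk x y p e' e'' hx hy
end

section
/- Let Γ and Γ' be finite connected loopless multigraphs, each with at least one edge, let w be a weight on Γ, and let φ : Γ → Γ' be a w-harmonic morphism of degree d. Then for every vertex v' of Γ' one has d = Σ_{v ∈ φ^{-1}(v')} m_φ(v). -/
open Finset

variable {V E V' E' : Type} [Fintype V] [Fintype E] [Fintype V'] [Fintype E']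
  [DecidableEq V] [DecidableEq E] [DecidableEq V'] [DecidableEq E']

/-- For a `w`-harmonic morphism `φ : Γ → Γ'` of degree `d` (both graphs
having at least one edge), for every vertex `v'` of `Γ'` one has
`d = Σ_{v ∈ φ⁻¹(v')} m_φ(v)`. -/
theorem degree_eq_sum_multiplicities
    (G : Multigraph V E) (G' : Multigraph V' E') (φ : GraphHom G G')
    (w : E → ℤ) (hw : ∀ e, 0 < w e) (m : V → ℤ)
    (hm : ∀ (v : V) (e' : E'), φ.vmap v ∈ G'.inc e' → localDeg G G' φ w v e' = m v)
    (hE : Nonempty E) (hE' : Nonempty E') (d : ℤ)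
    (hd : ∀ e' : E', ∑ e ∈ univ.filter (fun e => φ.emap e = e'), w e = d)
    (v' : V') :
    d = ∑ v ∈ univ.filter (fun v => φ.vmap v = v'), m v := by
  classical
  obtain ⟨e', he'⟩ : ∃ e' : E', v' ∈ G'.inc e' := by
    obtain ⟨e0⟩ := hE'
    have hl := G'.loopless e0
    obtain ⟨a, b, hab⟩ : ∃ a b, G'.inc e0 = s(a, b) := by
      induction h : G'.inc e0 with
      | _ a b => exact ⟨a, b, rfl⟩
    rw [hab, Sym2.mk_isDiag_iff] at hl
    haveI : Nontrivial V' := ⟨a, b, hl⟩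
    obtain ⟨u, hu⟩ := G'.connected.preconnected.exists_adj_of_nontrivial v'
    rw [SimpleGraph.fromRel_adj] at hu
    rcases hu.2 with ⟨e, he⟩ | ⟨e, he⟩
    · exact ⟨e, by simp [he]⟩
    · exact ⟨e, by simp [he]⟩
  have h1 : ∑ v ∈ univ.filter (fun v => φ.vmap v = v'), m v
      = ∑ v ∈ univ.filter (fun v => φ.vmap v = v'),
        ∑ e ∈ univ.filter (fun e => φ.emap e = e'), if v ∈ G.inc e then w e else 0 := by
    refine Finset.sum_congr rfl fun v hv => ?_
    rw [Finset.mem_filter] at hv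
    rw [← hm v e' (by rw [hv.2]; exact he'), localDeg, ← Finset.sum_filter, Finset.filter_filter]
    refine Finset.sum_congr ?_ fun _ _ => rfl
    ext e
    simp [and_comm]
  rw [h1, Finset.sum_comm, ← hd e']
  refine Finset.sum_congr rfl fun e he => ?_
  rw [Finset.mem_filter] at he
  have hc := φ.compat e
  have hl := G'.loopless (φ.emap e)
  rw [he.2] at hc hl
  rw [← hc] at he' hl
  obtain ⟨v, hv, hvv⟩ := Sym2.mem_map.1 he'
  rw [Finset.sum_eq_single v]
  · simp [hv]
  · intro u hu huv
    rw [Finset.mem_filter] at hu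
    refine if_neg fun hmem => hl ?_
    have := (Sym2.mem_and_mem_iff huv).1 ⟨hmem, hv⟩
    rw [this, Sym2.map_mk, Sym2.mk_isDiag_iff]
    exact hu.2.trans hvv.symm
  · intro h
    exact absurd (by simp [hvv]) h
end

section
/- Let Γ and Γ' be finite connected loopless multigraphs, each with at least one edge, let w be a weight on Γ, and let φ : Γ → Γ' be a w-harmonic morphism. Then φ is surjective on vertices and surjective on edges. -/
open Finset

variable {V E V' E' : Type} [Fintype V] [Fintype E] [Fintype V'] [Fintype E']
  [DecidableEq V] [DecidableEq E] [DecidableEq V'] [DecidableEq E']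

/-- A `w`-harmonic morphism `φ : Γ → Γ'` of finite connected loopless
multigraphs, each with at least one edge, is surjective on vertices and on edges. -/
theorem harmonic_morphism_surjective
    (G : Multigraph V E) (G' : Multigraph V' E') (φ : GraphHom G G')
    (w : E → ℤ) (hw : ∀ e, 0 < w e)
    (hharm : ∀ (v : V) (e₁ e₂ : E'), φ.vmap v ∈ G'.inc e₁ → φ.vmap v ∈ G'.inc e₂ →
      localDeg G G' φ w v e₁ = localDeg G G' φ w v e₂)
    (hE : Nonempty E) (hE' : Nonempty E') :
    Function.Surjective φ.vmap ∧ Function.Surjective φ.emap := by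
  have hinc : ∀ v : V, ∃ e, v ∈ G.inc e := by
    intro v
    obtain ⟨e0⟩ := hE
    have hnt : Nontrivial V := by
      have hl := G.loopless e0
      generalize G.inc e0 = z at hl
      induction z using Sym2.ind with
      | _ a b => exact ⟨a, b, fun h => hl (by simpa using h)⟩
    obtain ⟨u, hu⟩ := G.connected.preconnected.exists_adj_of_nontrivial v
    rw [SimpleGraph.fromRel_adj] at hu
    rcases hu.2 with ⟨e, he⟩ | ⟨e, he⟩ <;> exact ⟨e, by simp [he]⟩
  have hlift : ∀ (v : V) (e' : E'), φ.vmap v ∈ G'.inc e' →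
      ∃ e, v ∈ G.inc e ∧ φ.emap e = e' := by
    intro v e' hv
    obtain ⟨e, he⟩ := hinc v
    have h1 : φ.vmap v ∈ G'.inc (φ.emap e) := by
      rw [← φ.compat]
      exact Sym2.mem_map.2 ⟨v, he, rfl⟩
    have h2 := hharm v _ _ h1 hv
    have h3 : 0 < localDeg G G' φ w v (φ.emap e) :=
      Finset.sum_pos (fun e _ => hw e) ⟨e, by simp [he]⟩
    by_contra hne
    have h4 : localDeg G G' φ w v e' = 0 := by
      unfold localDeg
      rw [Finset.filter_eq_empty_iff.2, Finset.sum_empty]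
      intro x _ hx
      exact hne ⟨x, hx⟩
    omega
  have hstep : ∀ (v : V) (b : V') (e' : E'), φ.vmap v ∈ G'.inc e' → b ∈ G'.inc e' →
      ∃ u, φ.vmap u = b := by
    intro v b e' hv hb
    obtain ⟨e, -, rfl⟩ := hlift v e' hv
    rw [← φ.compat] at hb
    obtain ⟨u, -, hu⟩ := Sym2.mem_map.1 hb
    exact ⟨u, hu⟩
  have hV : Function.Surjective φ.vmap := by
    intro b
    obtain ⟨v0⟩ := G.connected.nonempty
    obtain ⟨p⟩ := G'.connected.preconnected (φ.vmap v0) b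
    have key : ∀ (a c : V') (p : (SimpleGraph.fromRel fun u v => ∃ e, G'.inc e = s(u, v)).Walk a c),
        (∃ u, φ.vmap u = a) → ∃ u, φ.vmap u = c := by
      intro a c p
      induction p with
      | nil => exact id
      | cons h p ih =>
        rintro ⟨u, rfl⟩
        apply ih
        rw [SimpleGraph.fromRel_adj] at h
        rcases h.2 with ⟨e, he⟩ | ⟨e, he⟩ <;>
          exact hstep u _ e (by simp [he]) (by simp [he])
    exact key _ _ p ⟨v0, rfl⟩
  refine ⟨hV, fun e' => ?_⟩
  obtain ⟨b, hb⟩ : ∃ b, b ∈ G'.inc e' := ⟨_, Sym2.out_fst_mem _⟩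
  obtain ⟨v, rfl⟩ := hV b
  obtain ⟨e, -, he⟩ := hlift v e' hb
  exact ⟨e, he⟩
end

section
/- (Tropical Riemann–Hurwitz formula) Let Γ and Γ' be finite connected loopless multigraphs, each with at least one edge, let w be a weight on Γ, and let φ : Γ → Γ' be a w-harmonic morphism of degree d. Then 2·b1(Γ) − 2 = (2·b1(Γ') − 2) · d + deg(R_φ), where R_φ = K_Γ − φ*K_{Γ'} is the ramification divisor of φ. -/
open Finset

variable {V E V' E' : Type} [Fintype V] [Fintype E] [Fintype V'] [Fintype E']
  [DecidableEq V] [DecidableEq E] [DecidableEq V'] [DecidableEq E']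

theorem aux_card (z : Sym2 V) (hz : ¬ z.IsDiag) :
    (univ.filter fun v => v ∈ z).card = 2 := by
  induction z with
  | _ a b =>
    have hab : a ≠ b := by simpa using hz
    have : (univ.filter fun v => v ∈ s(a, b)) = {a, b} := by
      ext v; simp
    rw [this, card_pair hab]

theorem aux_K (G : Multigraph V E) :
    ∑ v, G.K v = 2 * G.b1 - 2 := by
  have h1 : ∑ v, G.deg v = 2 * (Fintype.card E : ℤ) := by
    have : ∀ v, G.deg v = ∑ e : E, if v ∈ G.inc e then (1 : ℤ) else 0 := by
      intro v; simp [Multigraph.deg]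
    simp_rw [this]
    rw [sum_comm]
    have h2 : ∀ e : E, (∑ v : V, if v ∈ G.inc e then (1 : ℤ) else 0) = 2 := by
      intro e
      have := aux_card _ (G.loopless e)
      rw [Finset.sum_boole, this]; rfl
    simp_rw [h2]
    simp [mul_comm]
  simp only [Multigraph.K, Multigraph.b1, sum_sub_distrib, h1]
  simp
  ring

theorem aux_inc (G : Multigraph V E) (hE : Nonempty E) (v : V) : ∃ e, v ∈ G.inc e := by
  obtain ⟨e⟩ := hE
  have hn : Nontrivial V := by
    have := G.loopless e
    revert this
    induction G.inc e with
    | _ a b =>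
      intro h
      exact ⟨a, b, by simpa using h⟩
  obtain ⟨u, hu⟩ := G.connected.preconnected.exists_adj_of_nontrivial v
  rw [SimpleGraph.fromRel_adj] at hu
  obtain ⟨-, ⟨e, he⟩ | ⟨e, he⟩⟩ := hu <;> exact ⟨e, by rw [he]; simp⟩

theorem aux_fib (f : V → V') (z : Sym2 V) (hz : ¬ (Sym2.map f z).IsDiag) (v' : V')
    (hv : v' ∈ Sym2.map f z) :
    (univ.filter fun v => f v = v' ∧ v ∈ z).card = 1 := by
  induction z with
  | _ a b =>
    have hab : f a ≠ f b := by simpa using hz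
    rw [card_eq_one]
    simp only [Sym2.map_mk, Sym2.mem_iff] at hv
    rcases hv with h | h
    · refine ⟨a, ?_⟩
      ext v; simp only [mem_filter, mem_univ, true_and, Sym2.mem_iff, mem_singleton]
      constructor
      · rintro ⟨h1, rfl | rfl⟩
        · rfl
        · exact absurd (h.symm.trans h1.symm) hab
      · rintro rfl; exact ⟨h.symm, Or.inl rfl⟩
    · refine ⟨b, ?_⟩
      ext v; simp only [mem_filter, mem_univ, true_and, Sym2.mem_iff, mem_singleton]
      constructor
      · rintro ⟨h1, rfl | rfl⟩
        · exact absurd (h1.trans h) hab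
        · rfl
      · rintro rfl; exact ⟨h.symm, Or.inr rfl⟩

theorem aux_m
    (G : Multigraph V E) (G' : Multigraph V' E') (φ : GraphHom G G')
    (w : E → ℤ) (m : V → ℤ)
    (hm : ∀ (v : V) (e' : E'), φ.vmap v ∈ G'.inc e' → localDeg G G' φ w v e' = m v)
    (hE' : Nonempty E') (d : ℤ)
    (hd : ∀ e' : E', ∑ e ∈ univ.filter (fun e => φ.emap e = e'), w e = d) (v' : V') :
    ∑ v ∈ univ.filter (fun v => φ.vmap v = v'), m v = d := by
  obtain ⟨e', he'⟩ := aux_inc G' hE' v'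
  have h1 : ∀ v ∈ univ.filter (fun v => φ.vmap v = v'), m v =
      ∑ e ∈ univ.filter (fun e => φ.emap e = e'), if v ∈ G.inc e then w e else 0 := by
    intro v hv
    simp only [mem_filter, mem_univ, true_and] at hv
    rw [← hm v e' (by rw [hv]; exact he'), localDeg, ← sum_filter, filter_filter]
    simp only [and_comm]
  rw [sum_congr rfl h1, sum_comm, ← hd e']
  refine sum_congr rfl fun e he => ?_
  simp only [mem_filter, mem_univ, true_and] at he
  have hc := φ.compat e
  rw [he] at hc
  have := aux_fib φ.vmap (G.inc e) (by rw [hc]; exact G'.loopless e') v' (by rw [hc]; exact he')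
  rw [← sum_filter, filter_filter, sum_const, this, one_smul]

/-- Tropical Riemann–Hurwitz formula: For a `w`-harmonic morphism
`φ : Γ → Γ'` of degree `d` (both graphs having at least one edge),
`2·b1(Γ) - 2 = (2·b1(Γ') - 2)·d + deg R_φ`, where `R_φ = K_Γ - φ*K_{Γ'}`. -/
theorem tropical_riemann_hurwitz
    (G : Multigraph V E) (G' : Multigraph V' E') (φ : GraphHom G G')
    (w : E → ℤ) (hw : ∀ e, 0 < w e) (m : V → ℤ)
    (hm : ∀ (v : V) (e' : E'), φ.vmap v ∈ G'.inc e' → localDeg G G' φ w v e' = m v)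
    (hE : Nonempty E) (hE' : Nonempty E') (d : ℤ)
    (hd : ∀ e' : E', ∑ e ∈ univ.filter (fun e => φ.emap e = e'), w e = d) :
    2 * G.b1 - 2 = (2 * G'.b1 - 2) * d +
      (∑ v : V, (G.K v - m v * G'.K (φ.vmap v))) := by
  have h : ∑ v : V, m v * G'.K (φ.vmap v) = d * ∑ v', G'.K v' := by
    rw [← sum_fiberwise univ φ.vmap, mul_sum]
    refine sum_congr rfl fun v' _ => ?_
    rw [← aux_m G G' φ w m hm hE' d hd v', sum_mul]
    refine sum_congr rfl fun v hv => ?_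
    simp only [mem_filter, mem_univ, true_and] at hv
    rw [hv]
  rw [sum_sub_distrib, h, aux_K, aux_K]
  ring
end

section
/- Let Γ and Γ' be finite connected loopless multigraphs, each with at least one edge, let w be a weight on Γ, and let φ : Γ → Γ' be a w-harmonic morphism. Then the degree of the ramification divisor R_φ = K_Γ − φ*K_{Γ'} is an even integer. -/
open Finset

variable {V E V' E' : Type} [Fintype V] [Fintype E] [Fintype V'] [Fintype E']
  [DecidableEq V] [DecidableEq E] [DecidableEq V'] [DecidableEq E']

theorem sum_incident (G : Multigraph V E) (f : E → ℤ) :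
    ∑ v : V, ∑ e ∈ univ.filter (fun e => v ∈ G.inc e), f e = 2 * ∑ e, f e := by
  simp_rw [Finset.sum_filter]
  rw [Finset.sum_comm, Finset.mul_sum]
  refine Finset.sum_congr rfl fun e _ => ?_
  have hl := G.loopless e
  generalize G.inc e = s at hl
  induction s using Sym2.ind with
  | _ a b =>
    have hab : a ≠ b := by simpa using hl
    rw [← Finset.sum_filter]
    have : (univ.filter fun v => v ∈ s(a, b)) = {a, b} := by
      ext v; simp
    rw [this, Finset.sum_pair hab, two_mul]

/-- For a `w`-harmonic morphism `φ : Γ → Γ'` (both graphs having at least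
one edge), the degree of the ramification divisor `R_φ = K_Γ - φ*K_{Γ'}` is even. -/
theorem deg_ramification_divisor_even
    (G : Multigraph V E) (G' : Multigraph V' E') (φ : GraphHom G G')
    (w : E → ℤ) (hw : ∀ e, 0 < w e) (m : V → ℤ)
    (hm : ∀ (v : V) (e' : E'), φ.vmap v ∈ G'.inc e' → localDeg G G' φ w v e' = m v)
    (hE : Nonempty E) (hE' : Nonempty E') :
    Even (∑ v : V, (G.K v - m v * G'.K (φ.vmap v))) := by
  have h1 : ∑ v : V, G.deg v = 2 * ∑ _e : E, (1 : ℤ) := by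
    rw [← sum_incident G]
    simp [Multigraph.deg]
  have h2 : ∑ v : V, m v * G'.deg (φ.vmap v) = 2 * ∑ e : E, w e := by
    rw [← sum_incident G]
    refine Finset.sum_congr rfl fun v _ => ?_
    have hmaps : ∀ e ∈ univ.filter (fun e => v ∈ G.inc e),
        φ.emap e ∈ univ.filter (fun e' => φ.vmap v ∈ G'.inc e') := by
      intro e he
      simp only [Finset.mem_filter, Finset.mem_univ, true_and] at he ⊢
      rw [← φ.compat e]
      exact Sym2.mem_map.2 ⟨v, he, rfl⟩
    rw [← Finset.sum_fiberwise_of_maps_to hmaps]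
    have : ∀ e' ∈ univ.filter (fun e' => φ.vmap v ∈ G'.inc e'),
        ∑ e ∈ (univ.filter (fun e => v ∈ G.inc e)).filter (fun e => φ.emap e = e'), w e
          = m v := by
      intro e' he'
      rw [← hm v e' (by simpa using he'), localDeg, Finset.filter_filter]
    rw [Finset.sum_congr rfl this, Finset.sum_const, Multigraph.deg, nsmul_eq_mul, mul_comm]
  have h3 : ∑ v : V, (G.K v - m v * G'.K (φ.vmap v))
      = ∑ v : V, G.deg v - ∑ v : V, m v * G'.deg (φ.vmap v)
        + 2 * ∑ v : V, (m v - 1) := by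
    rw [Finset.mul_sum, ← Finset.sum_sub_distrib, ← Finset.sum_add_distrib]
    refine Finset.sum_congr rfl fun v _ => ?_
    simp only [Multigraph.K]; ring
  rw [h3, h1, h2, ← mul_sub, ← mul_add]
  exact even_two_mul _
end

section
/- Let Γ and Γ' be finite connected loopless multigraphs, each with at least one edge, let w be a weight on Γ, and let φ : Γ → Γ' be a w-harmonic morphism. Then b1(Γ') ≤ b1(Γ), where b1 denotes the first Betti number. -/
open Finset

variable {V E V' E' : Type} [Fintype V] [Fintype E] [Fintype V'] [Fintype E']
  [DecidableEq V] [DecidableEq E] [DecidableEq V'] [DecidableEq E']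

theorem mg_induct (G : Multigraph V E) (P : V → Prop) (u₀ : V) (h0 : P u₀)
    (hs : ∀ e a b, G.inc e = s(a, b) → P a → P b) (v : V) : P v := by
  obtain ⟨p⟩ := G.connected.preconnected u₀ v
  induction p with
  | nil => exact h0
  | cons h p ih =>
    apply ih
    rw [SimpleGraph.fromRel_adj] at h
    rcases h.2 with ⟨e, he⟩ | ⟨e, he⟩
    · exact hs e _ _ he h0
    · exact hs e _ _ (he.trans Sym2.eq_swap) h0

/-- incidence matrix -/
def incM (src dst : E → V) : Matrix V E ℚ :=
  fun v e => (if v = dst e then 1 else 0) - (if v = src e then 1 else 0)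

theorem incM_transpose_mulVec (src dst : E → V) (g : V → ℚ) (e : E) :
    ((incM src dst).transpose.mulVec g) e = g (dst e) - g (src e) := by
  simp [incM, Matrix.mulVec, dotProduct, sub_mul, Finset.sum_sub_distrib]

theorem incM_rank (G : Multigraph V E) (src dst : E → V)
    (h : ∀ e, G.inc e = s(src e, dst e)) :
    (incM src dst).rank + 1 = Fintype.card V := by
  obtain ⟨v₀⟩ := G.connected.nonempty
  rw [← Matrix.rank_transpose, Matrix.rank]
  have h1 := LinearMap.finrank_range_add_finrank_ker ((incM src dst).transpose.mulVecLin)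
  have hk : LinearMap.ker ((incM src dst).transpose.mulVecLin)
      = Submodule.span ℚ {(fun _ => 1 : V → ℚ)} := by
    ext g
    rw [LinearMap.mem_ker, Submodule.mem_span_singleton]
    constructor
    · intro hg
      have hg' : ∀ e, g (dst e) = g (src e) := by
        intro e
        have := congrFun hg e
        rw [Matrix.mulVecLin_apply, incM_transpose_mulVec] at this
        simpa [sub_eq_zero] using this
      refine ⟨g v₀, ?_⟩
      ext v
      have := mg_induct G (fun v => g v = g v₀) v₀ rfl (by
        intro e a b he ha
        have h2 := hg' e
        rw [h e, Sym2.eq_iff] at he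
        rcases he with ⟨rfl, rfl⟩ | ⟨rfl, rfl⟩
        · rw [h2, ha]
        · rw [← h2, ha]) v
      simp [this]
    · rintro ⟨a, rfl⟩
      ext e
      rw [Matrix.mulVecLin_apply, incM_transpose_mulVec]
      simp
  rw [hk, finrank_span_singleton (fun h => by simpa using congrFun h v₀)] at h1
  simpa using h1

theorem incM_ker (G : Multigraph V E) (src dst : E → V)
    (h : ∀ e, G.inc e = s(src e, dst e)) :
    (Module.finrank ℚ (LinearMap.ker (incM src dst).mulVecLin) : ℤ) = G.b1 := by
  have h1 := LinearMap.finrank_range_add_finrank_ker ((incM src dst).mulVecLin)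
  have h2 := incM_rank G src dst h
  rw [Matrix.rank] at h2
  rw [Module.finrank_fintype_fun_eq_card] at h1
  unfold Multigraph.b1
  omega

theorem betti_number_le
    (G : Multigraph V E) (G' : Multigraph V' E') (φ : GraphHom G G')
    (w : E → ℤ) (hw : ∀ e, 0 < w e)
    (hharm : ∀ (v : V) (e₁ e₂ : E'), φ.vmap v ∈ G'.inc e₁ → φ.vmap v ∈ G'.inc e₂ →
      localDeg G G' φ w v e₁ = localDeg G G' φ w v e₂)
    (hE : Nonempty E) (hE' : Nonempty E') :
    G'.b1 ≤ G.b1 := by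
  have horient : ∀ e', ∃ p : V' × V', G'.inc e' = s(p.1, p.2) := fun e' => by
    induction h : G'.inc e' with
    | _ a b => exact ⟨(a, b), rfl⟩
  choose p' hp' using horient
  have horient2 : ∀ e, ∃ p : V × V, G.inc e = s(p.1, p.2) ∧
      φ.vmap p.1 = (p' (φ.emap e)).1 ∧ φ.vmap p.2 = (p' (φ.emap e)).2 := fun e => by
    have hc := φ.compat e
    rw [hp'] at hc
    induction h : G.inc e with
    | _ a b =>
      rw [h, Sym2.map_mk, Sym2.eq_iff] at hc
      rcases hc with hc | hc
      · exact ⟨(a, b), rfl, hc.1, hc.2⟩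
      · exact ⟨(b, a), Sym2.eq_swap, hc.2, hc.1⟩
  choose p hp hp1 hp2 using horient2
  have hmemφ : ∀ v e, v ∈ G.inc e → φ.vmap v ∈ G'.inc (φ.emap e) := by
    intro v e hv
    rw [← φ.compat e, Sym2.mem_map]
    exact ⟨v, hv, rfl⟩
  -- every vertex has an incident edge
  have hinc : ∀ v, ∃ e, v ∈ G.inc e := by
    obtain ⟨e₀⟩ := hE
    refine mg_induct G _ (p e₀).1 ⟨e₀, by rw [hp]; simp⟩ ?_
    intro e a b he _
    exact ⟨e, by rw [he]; simp⟩
  -- local surjectivity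
  have hloc : ∀ v e', φ.vmap v ∈ G'.inc e' → ∃ e, v ∈ G.inc e ∧ φ.emap e = e' := by
    intro v e' hv
    obtain ⟨e, he⟩ := hinc v
    have h1 := hharm v e' (φ.emap e) hv (hmemφ v e he)
    have h2 : 0 < localDeg G G' φ w v (φ.emap e) :=
      Finset.sum_pos (fun e _ => hw e) ⟨e, by simp [he]⟩
    rw [← h1] at h2
    by_contra hcon
    push Not at hcon
    unfold localDeg at h2
    rw [Finset.filter_false_of_mem (fun e _ h => hcon e h.1 h.2)] at h2
    simp at h2
  have hvs : ∀ v', ∃ v, φ.vmap v = v' := by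
    obtain ⟨e₀⟩ := hE
    refine mg_induct G' _ (φ.vmap (p e₀).1) ⟨_, rfl⟩ ?_
    rintro e' a b he ⟨v, rfl⟩
    obtain ⟨e, hve, rfl⟩ := hloc v e' (by rw [he]; simp)
    have hb : b ∈ G'.inc (φ.emap e) := by rw [he]; simp
    rw [← φ.compat e, Sym2.mem_map] at hb
    obtain ⟨u, _, hu⟩ := hb
    exact ⟨u, hu⟩
  have hes : Function.Surjective φ.emap := by
    intro e'
    obtain ⟨v, hv⟩ := hvs (p' e').1
    obtain ⟨e, _, he⟩ := hloc v e' (by rw [hv, hp']; simp)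
    exact ⟨e, he⟩
  -- key identity
  have hkey : ∀ v e, v ∈ G.inc e → incM (fun e => (p e).1) (fun e => (p e).2) v e
      = incM (fun e => (p' e).1) (fun e => (p' e).2) (φ.vmap v) (φ.emap e) := by
    intro v e hv
    have hl := G.loopless e
    have hl' := G'.loopless (φ.emap e)
    rw [hp, Sym2.mk_isDiag_iff] at hl
    rw [hp', Sym2.mk_isDiag_iff] at hl'
    rw [hp, Sym2.mem_iff] at hv
    unfold incM
    rcases hv with rfl | rfl
    · simp [hp1, hl, hl']
    · simp [hp2, Ne.symm hl, Ne.symm hl']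
  have hkey0 : ∀ v e, v ∉ G.inc e → incM (fun e => (p e).1) (fun e => (p e).2) v e = 0 := by
    intro v e hv
    rw [hp, Sym2.mem_iff] at hv
    push Not at hv
    simp [incM, hv.1, hv.2]
  have hkey0' : ∀ v e, v ∉ G'.inc e →
      incM (fun e => (p' e).1) (fun e => (p' e).2) v e = 0 := by
    intro v e hv
    rw [hp', Sym2.mem_iff] at hv
    push Not at hv
    simp [incM, hv.1, hv.2]
  let T : (E' → ℚ) →ₗ[ℚ] (E → ℚ) :=
    { toFun := fun f e => (w e : ℚ) * f (φ.emap e)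
      map_add' := by intro f g; ext e; simp [mul_add]
      map_smul' := by intro c f; ext e; simp; ring }
  have hTinj : Function.Injective T := by
    intro f g hfg
    ext e'
    obtain ⟨e, rfl⟩ := hes e'
    have h1 : (w e : ℚ) * f (φ.emap e) = (w e : ℚ) * g (φ.emap e) := congrFun hfg e
    have h2 : (w e : ℚ) ≠ 0 := by exact_mod_cast (hw e).ne'
    exact mul_left_cancel₀ h2 h1
  set B := incM (fun e => (p e).1) (fun e => (p e).2) with hB
  set B' := incM (fun e => (p' e).1) (fun e => (p' e).2) with hB'
  have hdiv : ∀ f v, ∃ m : ℚ, (B.mulVec (T f)) v = m * (B'.mulVec f) (φ.vmap v) := by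
    intro f v
    obtain ⟨e₀, he₀⟩ := hinc v
    refine ⟨(localDeg G G' φ w v (φ.emap e₀) : ℚ), ?_⟩
    simp only [Matrix.mulVec, dotProduct]
    rw [← Finset.sum_fiberwise (s := univ) (g := φ.emap), Finset.mul_sum]
    refine Finset.sum_congr rfl fun e' _ => ?_
    have hL : ∑ e ∈ univ.filter (fun e => φ.emap e = e'), B v e * T f e
        = (localDeg G G' φ w v e' : ℚ) * (B' (φ.vmap v) e' * f e') := by
      unfold localDeg
      rw [Int.cast_sum, Finset.sum_mul, Finset.sum_filter, Finset.sum_filter]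
      refine Finset.sum_congr rfl fun e _ => ?_
      by_cases h1 : φ.emap e = e'
      · by_cases h2 : v ∈ G.inc e
        · have hT : T f e = (w e : ℚ) * f (φ.emap e) := rfl
          rw [if_pos h1, if_pos ⟨h2, h1⟩, hkey v e h2, hT, h1]
          ring
        · rw [if_pos h1, if_neg (fun h => h2 h.1), hkey0 v e h2, zero_mul]
      · rw [if_neg h1, if_neg (fun h => h1 h.2)]
    rw [hL]
    by_cases h3 : φ.vmap v ∈ G'.inc e'
    · rw [hharm v e' (φ.emap e₀) h3 (hmemφ v e₀ he₀)]
    · rw [hkey0' _ _ h3]; ring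
  rw [← incM_ker G _ _ hp, ← incM_ker G' _ _ hp']
  have hmaps : ∀ f ∈ LinearMap.ker B'.mulVecLin, T f ∈ LinearMap.ker B.mulVecLin := by
    intro f hf
    rw [LinearMap.mem_ker, Matrix.mulVecLin_apply] at hf ⊢
    ext v
    obtain ⟨m, hm⟩ := hdiv f v
    rw [hm, hf]
    simp
  have hfin := LinearMap.finrank_le_finrank_of_injective (f := T.restrict hmaps) (by
    intro x y hxy
    exact Subtype.ext (hTinj (congrArg Subtype.val hxy)))
  exact_mod_cast hfin
end

section
/- Let Γ and Γ' be finite connected loopless multigraphs, each with at least one edge, let w be a weight on Γ, and let φ : Γ → Γ' be a w-harmonic morphism. Fix an orientation of every edge of Γ' (a choice of head and tail among its two endpoints), and give each edge e of Γ the induced orientation: the head of e is the endpoint of e mapping to the head of φ(e). Let ∂ : ℤ^{E(Γ)} → ℤ^{V(Γ)} and ∂' : ℤ^{E(Γ')} → ℤ^{V(Γ')} be the boundary maps sending an oriented edge to (its head) − (its tail). Define the ℤ-linear maps σ : ℤ^{E(Γ')} → ℤ^{E(Γ)} by σ(e') = Σ_{e ∈ φ^{-1}(e')} w(e)·e and σ_0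 : ℤ^{V(Γ')} → ℤ^{V(Γ)} by σ_0(v') = Σ_{v ∈ φ^{-1}(v')} m_φ(v)·v. Then σ is injective and ∂ ∘ σ = σ_0 ∘ ∂'; in particular σ maps ker ∂' injectively into ker ∂. -/
open Finset

variable {V E V' E' : Type} [Fintype V] [Fintype E] [Fintype V'] [Fintype E']
  [DecidableEq V] [DecidableEq E] [DecidableEq V'] [DecidableEq E']

theorem Multigraph.conn_ind (G : Multigraph V E) (P : V → Prop) (v₀ : V) (h₀ : P v₀)
    (hstep : ∀ e u v, G.inc e = s(u, v) → P u → P v) (v : V) : P v := by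
  have h := G.connected.preconnected v₀ v
  rw [SimpleGraph.reachable_iff_reflTransGen] at h
  induction h with
  | refl => exact h₀
  | tail _ hadj ih =>
    rw [SimpleGraph.fromRel_adj] at hadj
    obtain ⟨_, ⟨e, he⟩ | ⟨e, he⟩⟩ := hadj
    · exact hstep e _ _ he ih
    · exact hstep e _ _ (he.trans Sym2.eq_swap) ih

theorem half_sum (φe : E → E') (w : E → ℤ) (m : ℤ) (v : V) (v' : V')
    (h : E → V) (h' : E' → V') (y : E' → ℤ)
    (hh : ∀ e, h e = v → h' (φe e) = v')
    (hm : ∀ e', h' e' = v' → ∑ e ∈ univ.filter (fun e => h e = v ∧ φe e = e'), w e = m) :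
    ∑ e ∈ univ.filter (fun e => h e = v), w e * y (φe e)
      = m * ∑ e' ∈ univ.filter (fun e' => h' e' = v'), y e' := by
  rw [← Finset.sum_fiberwise_of_maps_to (t := univ.filter (fun e' => h' e' = v')) (g := φe)
    (by intro e he; simp at he ⊢; exact hh e he), Finset.mul_sum]
  refine Finset.sum_congr rfl fun e' he' => ?_
  rw [← hm e' (by simpa using he'), Finset.sum_mul, Finset.filter_filter]
  refine Finset.sum_congr rfl fun e he => ?_
  simp at he
  rw [he.2]

/-- Given a `w`-harmonic morphism `φ : Γ → Γ'` (both graphs having at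
least one edge), an orientation `(ehead', etail')` of the edges of `Γ'` and the induced
orientation `(ehead, etail)` of the edges of `Γ` (the head of `e` is the endpoint of `e`
mapping to the head of `φ(e)`), the map `σ : ℤ^{E(Γ')} → ℤ^{E(Γ)}`,
`σ(e') = Σ_{e ∈ φ⁻¹(e')} w(e)·e`, is injective and satisfies `∂ ∘ σ = σ₀ ∘ ∂'`, where
`σ₀(v') = Σ_{v ∈ φ⁻¹(v')} m_φ(v)·v` and `∂, ∂'` are the boundary maps
(oriented edge ↦ head − tail); in particular `σ` maps `ker ∂'` injectively into `ker ∂`. -/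
theorem chain_complex_section
    (G : Multigraph V E) (G' : Multigraph V' E') (φ : GraphHom G G')
    (w : E → ℤ) (hw : ∀ e, 0 < w e) (m : V → ℤ)
    (hm : ∀ (v : V) (e' : E'), φ.vmap v ∈ G'.inc e' → localDeg G G' φ w v e' = m v)
    (hE : Nonempty E) (hE' : Nonempty E')
    (ehead' etail' : E' → V') (hor' : ∀ e' : E', G'.inc e' = s(ehead' e', etail' e'))
    (ehead etail : E → V) (hor : ∀ e : E, G.inc e = s(ehead e, etail e))
    (hhead : ∀ e : E, φ.vmap (ehead e) = ehead' (φ.emap e))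
    (htail : ∀ e : E, φ.vmap (etail e) = etail' (φ.emap e)) :
    -- boundary map of Γ : ℤ^{E(Γ)} → ℤ^{V(Γ)}
    let bd : (E → ℤ) → (V → ℤ) := fun x v =>
      (∑ e ∈ univ.filter (fun e => ehead e = v), x e)
        - (∑ e ∈ univ.filter (fun e => etail e = v), x e)
    -- boundary map of Γ' : ℤ^{E(Γ')} → ℤ^{V(Γ')}
    let bd' : (E' → ℤ) → (V' → ℤ) := fun y v' =>
      (∑ e' ∈ univ.filter (fun e' => ehead' e' = v'), y e')
        - (∑ e' ∈ univ.filter (fun e' => etail' e' = v'), y e')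
    -- the section σ : ℤ^{E(Γ')} → ℤ^{E(Γ)}, e' ↦ Σ_{e ∈ φ⁻¹(e')} w(e)·e
    let σ : (E' → ℤ) → (E → ℤ) := fun y e => w e * y (φ.emap e)
    -- σ₀ : ℤ^{V(Γ')} → ℤ^{V(Γ)}, v' ↦ Σ_{v ∈ φ⁻¹(v')} m_φ(v)·v
    let σ₀ : (V' → ℤ) → (V → ℤ) := fun y v => m v * y (φ.vmap v)
    Function.Injective σ ∧ (∀ y : E' → ℤ, bd (σ y) = σ₀ (bd' y)) ∧
      (∀ y : E' → ℤ, bd' y = 0 → bd (σ y) = 0) := by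
  intro bd bd' σ σ₀
  have hne : ∀ e', ehead' e' ≠ etail' e' := by
    intro e' h
    have := G'.loopless e'
    rw [hor' e'] at this
    exact this (by simpa using h)
  have hcomm : ∀ y : E' → ℤ, bd (σ y) = σ₀ (bd' y) := by
    intro y
    funext v
    simp only [bd, bd', σ, σ₀]
    rw [mul_sub]
    congr 1
    · refine half_sum φ.emap w (m v) v (φ.vmap v) ehead ehead' y ?_ ?_
      · rintro e rfl; exact (hhead e).symm
      · intro e' he'
        rw [← hm v e' (by rw [hor' e', he']; simp), localDeg]
        refine Finset.sum_congr (Finset.filter_congr fun e _ => ?_) fun _ _ => rfl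
        rw [hor e, Sym2.mem_iff]
        constructor
        · rintro ⟨h1, h2⟩; exact ⟨Or.inl h1.symm, h2⟩
        · rintro ⟨h1 | h1, h2⟩
          · exact ⟨h1.symm, h2⟩
          · exact absurd (by rw [he', h1, htail, h2]) (hne e')
    · refine half_sum φ.emap w (m v) v (φ.vmap v) etail etail' y ?_ ?_
      · rintro e rfl; exact (htail e).symm
      · intro e' he'
        rw [← hm v e' (by rw [hor' e', he']; simp), localDeg]
        refine Finset.sum_congr (Finset.filter_congr fun e _ => ?_) fun _ _ => rfl
        rw [hor e, Sym2.mem_iff]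
        constructor
        · rintro ⟨h1, h2⟩; exact ⟨Or.inr h1.symm, h2⟩
        · rintro ⟨h1 | h1, h2⟩
          · exact absurd (by rw [he', h1, hhead, h2]) (hne e')
          · exact ⟨h1.symm, h2⟩
  obtain ⟨e₀⟩ := hE
  have hinc : ∀ v, ∃ e, v ∈ G.inc e :=
    G.conn_ind _ (ehead e₀) ⟨e₀, by rw [hor]; simp⟩
      (fun e u v he _ => ⟨e, by rw [he]; simp⟩)
  have hmpos : ∀ v, 0 < m v := by
    intro v
    obtain ⟨e, he⟩ := hinc v
    have hmem : φ.vmap v ∈ G'.inc (φ.emap e) := by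
      rw [← φ.compat e]; exact Sym2.mem_map.2 ⟨v, he, rfl⟩
    rw [← hm v _ hmem, localDeg]
    exact Finset.sum_pos (fun e _ => hw e) ⟨e, by simp [he]⟩
  have hlift : ∀ v e', φ.vmap v ∈ G'.inc e' → ∃ e, φ.emap e = e' := by
    intro v e' h
    have h1 := hmpos v
    rw [← hm v e' h, localDeg] at h1
    obtain ⟨e, he, _⟩ := Finset.exists_ne_zero_of_sum_ne_zero h1.ne'
    simp at he
    exact ⟨e, he.2⟩
  have hvs : ∀ v', ∃ v, φ.vmap v = v' := by
    refine G'.conn_ind _ (φ.vmap (ehead e₀)) ⟨_, rfl⟩ ?_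
    rintro e' u' v' he' ⟨u, rfl⟩
    obtain ⟨e, rfl⟩ := hlift u e' (by rw [he']; simp)
    have : v' ∈ Sym2.map φ.vmap (G.inc e) := by rw [φ.compat, he']; simp
    obtain ⟨v, _, hv⟩ := Sym2.mem_map.1 this
    exact ⟨v, hv⟩
  refine ⟨?_, hcomm, ?_⟩
  · intro y z hyz
    funext e'
    obtain ⟨v, hv⟩ := hvs (ehead' e')
    obtain ⟨e, rfl⟩ := hlift v e' (by rw [hv, hor']; simp)
    exact mul_left_cancel₀ (hw e).ne' (congrFun hyz e)
  · intro y hy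
    rw [hcomm, hy]
    funext v
    simp [σ₀]
end
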